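/- Assume all matrices X ∈ 𝒞 have the same trace R > 0 and that there exists a positive definite X ∈ 𝒞. Let Y ∈ ℳ_p, let μ ∈ ℝ^m and S = C − 𝒜*(μ), and assume 2 S Y ∈ T_Yℳ_p. Let Ỹ = [Y | 0] ∈ ℝ^{n×(p+1)} be Y padded with one zero column, so Ỹ ∈ ℳ_{p+1}, and let λ = inf{2⟨Ż, S Ż⟩ : Ż ∈ T_Ỹℳ_{p+1}, ‖Ż‖ = 1}. Then 0 ≤ 2(Tr(C Y Yᵀ) − f*) ≤ −R λ, with no explicit control of ‖2 S Y‖ required. -/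

import Mathlib

open Matrix MeasureTheory

noncomputable section

/-- Frobenius inner product `⟨A, B⟩ = Tr(Aᵀ B)`. -/
def frobInner {n p : ℕ} (A B : Matrix (Fin n) (Fin p) ℝ) : ℝ := (Aᵀ * B).trace

/-- Frobenius norm. -/
def frobNorm {n p : ℕ} (A : Matrix (Fin n) (Fin p) ℝ) : ℝ := Real.sqrt (frobInner A A)

/-- The constraint map 𝒜, `𝒜(X) i = Tr(A i * X)`. -/
def Aop {n m : ℕ} (A : Fin m → Matrix (Fin n) (Fin n) ℝ) (X : Matrix (Fin n) (Fin n) ℝ) :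
    Fin m → ℝ := fun i => (A i * X).trace

/-- The adjoint 𝒜*, `𝒜*(μ) = ∑ i, μ i • A i`. -/
def Aadj {n m : ℕ} (A : Fin m → Matrix (Fin n) (Fin n) ℝ) (μ : Fin m → ℝ) :
    Matrix (Fin n) (Fin n) ℝ := ∑ i, μ i • A i

/-- The SDP feasible set 𝒞. -/
def sdpFeas {n m : ℕ} (A : Fin m → Matrix (Fin n) (Fin n) ℝ) (b : Fin m → ℝ) :
    Set (Matrix (Fin n) (Fin n) ℝ) := {X | X.IsSymm ∧ Aop A X = b ∧ X.PosSemidef}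

/-- Optimal value `f* = inf {Tr(C X) : X ∈ 𝒞}` of the SDP. -/
def fstar {n m : ℕ} (A : Fin m → Matrix (Fin n) (Fin n) ℝ) (b : Fin m → ℝ)
    (C : Matrix (Fin n) (Fin n) ℝ) : ℝ := sInf ((fun X => (C * X).trace) '' sdpFeas A b)

/-- The factorized feasible set `ℳ_p = {Y : 𝒜(Y Yᵀ) = b}`. -/
def facFeas {n m : ℕ} (A : Fin m → Matrix (Fin n) (Fin n) ℝ) (b : Fin m → ℝ) (p : ℕ) :
    Set (Matrix (Fin n) (Fin p) ℝ) := {Y | Aop A (Y * Yᵀ) = b}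

/-- Tangent space `T_Yℳ = {Ydot : 𝒜(Ydot Yᵀ + Y Ydotᵀ) = 0}`. -/
def tangentSet {n m p : ℕ} (A : Fin m → Matrix (Fin n) (Fin n) ℝ)
    (Y : Matrix (Fin n) (Fin p) ℝ) : Set (Matrix (Fin n) (Fin p) ℝ) :=
  {Ydot | Aop A (Ydot * Yᵀ + Y * Ydotᵀ) = 0}

/-- Second-order critical point of the factorized problem. -/
def IsSOCP {n m p : ℕ} (A : Fin m → Matrix (Fin n) (Fin n) ℝ) (b : Fin m → ℝ)
    (C : Matrix (Fin n) (Fin n) ℝ) (Y : Matrix (Fin n) (Fin p) ℝ) : Prop :=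
  Y ∈ facFeas A b p ∧ ∃ μ : Fin m → ℝ,
    (C - Aadj A μ) * Y = 0 ∧
    ∀ Ydot ∈ tangentSet A Y, 0 ≤ frobInner Ydot ((C - Aadj A μ) * Ydot)

/-- The real vector space of symmetric `n × n` matrices. -/
def symmSpace (n : ℕ) : Submodule ℝ (Matrix (Fin n) (Fin n) ℝ) where
  carrier := {X | X.IsSymm}
  add_mem' := fun ha hb => ha.add hb
  zero_mem' := Matrix.isSymm_zero
  smul_mem' := fun c X hX => by
    show (c • X)ᵀ = c • X
    rw [Matrix.transpose_smul, hX]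

instance (n : ℕ) : MeasurableSpace ↥(symmSpace n) := borel _

/-- A set of symmetric matrices is null if it has measure zero for every additive Haar
measure on the finite-dimensional real vector space of symmetric `n × n` matrices. -/
def IsNullSymmSet (n : ℕ) (S : Set (Matrix (Fin n) (Fin n) ℝ)) : Prop :=
  ∀ μ : Measure ↥(symmSpace n), μ.IsAddHaarMeasure →
    μ {C : ↥(symmSpace n) | (C : Matrix (Fin n) (Fin n) ℝ) ∈ S} = 0

lemma aux_factor {n : ℕ} {X : Matrix (Fin n) (Fin n) ℝ} (hX : X.PosSemidef) :
    ∃ B : Matrix (Fin n) (Fin n) ℝ, X = Bᵀ * B := by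
  open scoped MatrixOrder in
  obtain ⟨B, hB⟩ := CStarAlgebra.nonneg_iff_eq_star_mul_self.mp hX.nonneg
  exact ⟨B, by simpa [Matrix.star_eq_conjTranspose, conjTranspose_eq_transpose_of_trivial] using hB⟩

lemma aux_psd {n : ℕ} {W : Matrix (Fin n) (Fin n) ℝ} (hW : W.IsSymm)
    (h : ∀ x : Fin n → ℝ, 0 ≤ x ⬝ᵥ (W *ᵥ x)) : W.PosSemidef := by
  refine Matrix.PosSemidef.of_dotProduct_mulVec_nonneg ?_ ?_
  · rw [Matrix.IsHermitian, conjTranspose_eq_transpose_of_trivial]; exact hW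
  · intro x; simpa using h x

lemma aux_bound {n : ℕ} {W : Matrix (Fin n) (Fin n) ℝ} (hW : W.IsSymm) :
    ∃ M : ℝ, 0 < M ∧ (W + M • (1 : Matrix (Fin n) (Fin n) ℝ)).PosSemidef := by
  have h0 : 0 ≤ ∑ i, ∑ j, |W i j| :=
    Finset.sum_nonneg fun i _ => Finset.sum_nonneg fun j _ => abs_nonneg _
  refine ⟨∑ i, ∑ j, |W i j| + 1, by linarith, aux_psd ?_ ?_⟩
  · exact hW.add (Matrix.isSymm_one.smul _)
  · intro x
    have hx : ∀ i, x i ^ 2 ≤ x ⬝ᵥ x := by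
      intro i
      have := Finset.single_le_sum (f := fun i => x i * x i)
        (fun i _ => mul_self_nonneg (x i)) (Finset.mem_univ i)
      simp only [dotProduct]; nlinarith
    have hxx : 0 ≤ x ⬝ᵥ x := Finset.sum_nonneg fun i _ => mul_self_nonneg (x i)
    have h1 : -((∑ i, ∑ j, |W i j|) * (x ⬝ᵥ x)) ≤ x ⬝ᵥ (W *ᵥ x) := by
      rw [Finset.sum_mul, ← Finset.sum_neg_distrib]
      unfold dotProduct mulVec
      refine Finset.sum_le_sum fun i _ => ?_
      rw [Finset.sum_mul, ← Finset.sum_neg_distrib]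
      unfold dotProduct
      rw [Finset.mul_sum]
      refine Finset.sum_le_sum fun j _ => ?_
      have h2 : |x i * x j| ≤ x ⬝ᵥ x := by
        have := hx i
        have := hx j
        rw [abs_le]; constructor <;> nlinarith [sq_nonneg (x i + x j), sq_nonneg (x i - x j)]
      have h3 : |W i j| * |x i * x j| ≤ |W i j| * (x ⬝ᵥ x) :=
        mul_le_mul_of_nonneg_left h2 (abs_nonneg _)
      rw [← abs_mul] at h3
      have h4 := neg_abs_le (W i j * (x i * x j))
      unfold dotProduct at h3
      linarith
    rw [add_mulVec, dotProduct_add, smul_mulVec, one_mulVec, dotProduct_smul, smul_eq_mul]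
    linarith

lemma aux_perturb {n : ℕ} {X V : Matrix (Fin n) (Fin n) ℝ} (hX : X.PosDef) (hV : V.IsSymm) :
    ∃ e : ℝ, 0 < e ∧ (X + e • V).PosSemidef := by
  obtain ⟨B, hB⟩ := aux_factor hX.posSemidef
  have hu : IsUnit B.det := by
    have := (Matrix.isUnit_iff_isUnit_det _).mp hX.isUnit
    rw [hB, det_mul] at this
    exact isUnit_of_mul_isUnit_right this
  have hut : IsUnit Bᵀ.det := by rwa [det_transpose]
  have hW : ((B⁻¹)ᵀ * V * B⁻¹).IsSymm := by
    unfold Matrix.IsSymm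
    simp only [transpose_mul, transpose_transpose, hV.eq, Matrix.mul_assoc]
  obtain ⟨M, hM, hp⟩ := aux_bound hW
  refine ⟨M⁻¹, inv_pos.mpr hM, ?_⟩
  have h1 := (hp.conjTranspose_mul_mul_same B).smul (inv_nonneg.mpr hM.le)
  convert h1 using 1
  rw [conjTranspose_eq_transpose_of_trivial, Matrix.mul_add, Matrix.add_mul, transpose_nonsing_inv]
  have : Bᵀ * (Bᵀ⁻¹ * V * B⁻¹) * B = V := by
    rw [Matrix.mul_assoc Bᵀ⁻¹, mul_nonsing_inv_cancel_left _ _ hut, Matrix.mul_assoc,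
      nonsing_inv_mul _ hu, Matrix.mul_one]
  rw [this, Matrix.mul_smul, Matrix.smul_mul, Matrix.mul_one, ← hB, smul_add, smul_smul,
    inv_mul_cancel₀ hM.ne', one_smul, add_comm]

lemma aux_trace_mul {n p : ℕ} {W : Matrix (Fin n) (Fin n) ℝ} (hW : W.PosSemidef)
    (Z : Matrix (Fin n) (Fin p) ℝ) : 0 ≤ frobInner Z (W * Z) := by
  have := (hW.conjTranspose_mul_mul_same Z).trace_nonneg
  rwa [conjTranspose_eq_transpose_of_trivial, Matrix.mul_assoc] at this

lemma aux_trace_mul2 {n : ℕ} {W X : Matrix (Fin n) (Fin n) ℝ} (hW : W.PosSemidef)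
    (hX : X.PosSemidef) : 0 ≤ (W * X).trace := by
  obtain ⟨B, hB⟩ := aux_factor hX
  have := aux_trace_mul hW Bᵀ
  rw [frobInner, transpose_transpose, ← Matrix.mul_assoc, trace_mul_comm,
    ← Matrix.mul_assoc, ← hB, trace_mul_comm] at this
  exact this

lemma aux_Aop_add {n m : ℕ} (A : Fin m → Matrix (Fin n) (Fin n) ℝ)
    (X V : Matrix (Fin n) (Fin n) ℝ) (e : ℝ) : Aop A (X + e • V) = Aop A X + e • Aop A V := by
  ext i; simp [Aop, Matrix.mul_add]

lemma aux_Aadj_trace {n m : ℕ} (A : Fin m → Matrix (Fin n) (Fin n) ℝ) (μ : Fin m → ℝ)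
    (X : Matrix (Fin n) (Fin n) ℝ) : (Aadj A μ * X).trace = ∑ i, μ i * Aop A X i := by
  simp [Aadj, Aop, Matrix.sum_mul, trace_sum]

lemma aux_snoc_mul {n p : ℕ} (Y Z : Matrix (Fin n) (Fin p) ℝ) (u v : Fin n → ℝ) :
    (Matrix.of fun i => Fin.snoc (α := fun _ => ℝ) (Y i) (u i) : Matrix (Fin n) (Fin (p+1)) ℝ) *
    (Matrix.of fun i => Fin.snoc (α := fun _ => ℝ) (Z i) (v i) : Matrix (Fin n) (Fin (p+1)) ℝ)ᵀ
      = Y * Zᵀ + vecMulVec u v := by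
  ext i j
  simp [Matrix.mul_apply, Fin.sum_univ_castSucc, vecMulVec_apply]

/-- when all feasible `X` have the same trace `R > 0` and a positive definite
feasible point exists, the optimality gap bound simplifies to `0 ≤ 2(f(Y) − f*) ≤ −R λ`. -/
theorem optimality_gap_via_padded_point_constant_trace
    (n m p : ℕ) (hn : 0 < n) (hm : 0 < m) (hp : 0 < p)
    (A : Fin m → Matrix (Fin n) (Fin n) ℝ) (hA : ∀ i, (A i).IsSymm) (b : Fin m → ℝ)
    (C : Matrix (Fin n) (Fin n) ℝ) (hC : C.IsSymm)
    (R : ℝ) (hRpos : 0 < R)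
    (htrace : ∀ X ∈ sdpFeas A b, X.trace = R)
    (hpd : ∃ X ∈ sdpFeas A b, X.PosDef)
    (Y : Matrix (Fin n) (Fin p) ℝ) (hY : Y ∈ facFeas A b p)
    (μ : Fin m → ℝ) (S : Matrix (Fin n) (Fin n) ℝ) (hS : S = C - Aadj A μ)
    (htan : (2 : ℝ) • (S * Y) ∈ tangentSet A Y)
    (Ytil : Matrix (Fin n) (Fin (p + 1)) ℝ)
    (hYtil : Ytil = Matrix.of fun i => Fin.snoc (Y i) (0 : ℝ))
    (lam : ℝ)
    (hlam : lam = sInf {t : ℝ | ∃ Zdot ∈ tangentSet A Ytil,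
      frobNorm Zdot = 1 ∧ t = 2 * frobInner Zdot (S * Zdot)}) :
    Ytil ∈ facFeas A b (p + 1) ∧
    0 ≤ 2 * ((C * (Y * Yᵀ)).trace - fstar A b C) ∧
    2 * ((C * (Y * Yᵀ)).trace - fstar A b C) ≤ -(R * lam) := by
  have hSsym : S.IsSymm := by
    have hAs : (Aadj A μ).IsSymm := by
      unfold Matrix.IsSymm Aadj
      rw [transpose_sum]
      exact Finset.sum_congr rfl fun i _ => by rw [transpose_smul, (hA i).eq]
    rw [hS]; exact hC.sub hAs
  have hYY : Ytil * Ytilᵀ = Y * Yᵀ := by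
    have := aux_snoc_mul Y Y (fun _ => 0) (fun _ => 0)
    rw [hYtil]; rw [this]; ext i j; simp [vecMulVec_apply]
  -- traces of directions in the kernel vanish
  have hker : ∀ V : Matrix (Fin n) (Fin n) ℝ, V.IsSymm → Aop A V = 0 → V.trace = 0 := by
    intro V hV hAV
    obtain ⟨X, hX, hXpd⟩ := hpd
    obtain ⟨e, he, hps⟩ := aux_perturb hXpd hV
    have h1 := htrace _ (show X + e • V ∈ sdpFeas A b from
      ⟨hX.1.add (hV.smul e), by rw [aux_Aop_add, hX.2.1, hAV]; simp, hps⟩)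
    have h2 := htrace X hX
    rw [trace_add, trace_smul, h2, smul_eq_mul] at h1
    have : e * V.trace = 0 := by linarith
    exact (mul_eq_zero.mp this).resolve_left he.ne'
  have hSY : (S * (Y * Yᵀ)).trace = 0 := by
    have h1 := hker _ (by
      unfold Matrix.IsSymm
      rw [transpose_add, transpose_mul, transpose_mul, transpose_transpose, transpose_transpose,
        add_comm]) htan
    have h2 : (Y * ((2 : ℝ) • (S * Y))ᵀ).trace = ((2 : ℝ) • (S * Y) * Yᵀ).trace := by
      rw [← trace_transpose, transpose_mul, transpose_transpose]
    rw [trace_add, h2, Matrix.smul_mul, trace_smul, Matrix.mul_assoc, smul_eq_mul] at h1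
    linarith
  -- the set defining lam is bounded below
  have hbdd : BddBelow {t : ℝ | ∃ Zdot ∈ tangentSet A Ytil,
      frobNorm Zdot = 1 ∧ t = 2 * frobInner Zdot (S * Zdot)} := by
    obtain ⟨M, hM, hp⟩ := aux_bound hSsym
    refine ⟨-(2 * M), ?_⟩
    rintro t ⟨Z, -, hZ, rfl⟩
    have hZ1 : frobInner Z Z = 1 := by
      unfold frobNorm at hZ; exact Real.sqrt_eq_one.mp hZ
    have := aux_trace_mul hp Z
    have h2 : frobInner Z ((S + M • 1) * Z) = frobInner Z (S * Z) + M * frobInner Z Z := by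
      simp [frobInner, Matrix.add_mul, Matrix.mul_add]
    rw [h2, hZ1] at this
    linarith
  have hunit : ∀ z : Fin n → ℝ, z ⬝ᵥ z = 1 → lam ≤ 2 * (z ⬝ᵥ (S *ᵥ z)) := by
    intro z hz
    rw [hlam]
    have key : ∀ W : Matrix (Fin n) (Fin n) ℝ,
        frobInner (Matrix.of fun i => Fin.snoc (α := fun _ => ℝ) (fun _ : Fin p => 0) (z i) :
          Matrix (Fin n) (Fin (p+1)) ℝ)
          (W * (Matrix.of fun i => Fin.snoc (α := fun _ => ℝ) (fun _ : Fin p => 0) (z i) :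
          Matrix (Fin n) (Fin (p+1)) ℝ)) = z ⬝ᵥ (W *ᵥ z) := by
      intro W
      simp [frobInner, Matrix.trace, Matrix.mul_apply, Fin.sum_univ_castSucc, dotProduct, mulVec]
    refine csInf_le hbdd ⟨Matrix.of fun i => Fin.snoc (fun _ => 0) (z i), ?_, ?_, ?_⟩
    · have h1 := aux_snoc_mul (0 : Matrix (Fin n) (Fin p) ℝ) Y z (fun _ => 0)
      have h2 := aux_snoc_mul Y (0 : Matrix (Fin n) (Fin p) ℝ) (fun _ => 0) z
      have h1' : (Matrix.of fun i => Fin.snoc (α := fun _ => ℝ) (fun _ : Fin p => 0) (z i) :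
          Matrix (Fin n) (Fin (p+1)) ℝ) * Ytilᵀ = 0 := by
        rw [hYtil]; refine Eq.trans h1 ?_; ext i j; simp [vecMulVec_apply]
      have h2' : Ytil * (Matrix.of fun i => Fin.snoc (α := fun _ => ℝ) (fun _ : Fin p => 0) (z i) :
          Matrix (Fin n) (Fin (p+1)) ℝ)ᵀ = 0 := by
        rw [hYtil]; refine Eq.trans h2 ?_; ext i j; simp [vecMulVec_apply]
      show Aop A _ = 0
      rw [h1', h2']; ext i; simp [Aop]
    · have := key 1
      rw [Matrix.one_mul, one_mulVec, hz] at this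
      unfold frobNorm; rw [this]; simp
    · rw [key S]
  have hpsd : ((2 : ℝ) • S + (-lam) • (1 : Matrix (Fin n) (Fin n) ℝ)).PosSemidef := by
    refine aux_psd ((hSsym.smul _).add (Matrix.isSymm_one.smul _)) fun x => ?_
    rw [add_mulVec, dotProduct_add, smul_mulVec, smul_mulVec, one_mulVec, dotProduct_smul,
      dotProduct_smul, smul_eq_mul, smul_eq_mul]
    have hxx : 0 ≤ x ⬝ᵥ x := Finset.sum_nonneg fun i _ => mul_self_nonneg (x i)
    rcases hxx.eq_or_lt with h | h
    · have : x = 0 := dotProduct_self_eq_zero.mp h.symm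
      simp [this]
    · have hs : Real.sqrt (x ⬝ᵥ x) ^ 2 = x ⬝ᵥ x := Real.sq_sqrt hxx
      have hs0 : 0 < Real.sqrt (x ⬝ᵥ x) := Real.sqrt_pos.mpr h
      set r := Real.sqrt (x ⬝ᵥ x) with hr
      have h1 := hunit (r⁻¹ • x) (by
        rw [smul_dotProduct, dotProduct_smul, ← hs, smul_eq_mul, smul_eq_mul]; field_simp)
      rw [mulVec_smul, smul_dotProduct, dotProduct_smul, smul_eq_mul, smul_eq_mul] at h1
      have h2 := mul_le_mul_of_nonneg_left h1 hxx
      have h3 : (x ⬝ᵥ x) * (2 * (r⁻¹ * (r⁻¹ * (x ⬝ᵥ (S *ᵥ x))))) = 2 * (x ⬝ᵥ (S *ᵥ x)) := by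
        rw [← hs]; field_simp
      rw [h3] at h2
      linarith
  have hCX : ∀ X, Aop A X = b → (C * X).trace = (S * X).trace + ∑ i, μ i * b i := by
    intro X hX
    rw [hS, Matrix.sub_mul, trace_sub, aux_Aadj_trace, hX]; ring
  have hlow : ∀ X ∈ sdpFeas A b, R * lam ≤ 2 * (S * X).trace := by
    intro X hX
    have h1 := aux_trace_mul2 hpsd hX.2.2
    rw [Matrix.add_mul, trace_add, Matrix.smul_mul, Matrix.smul_mul, trace_smul, trace_smul,
      Matrix.one_mul, htrace X hX, smul_eq_mul, smul_eq_mul] at h1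
    linarith
  have hYf : Y * Yᵀ ∈ sdpFeas A b := by
    refine ⟨by unfold Matrix.IsSymm; simp, hY, ?_⟩
    have := posSemidef_self_mul_conjTranspose Y
    rwa [conjTranspose_eq_transpose_of_trivial] at this
  have hlb : ∀ t ∈ (fun X => (C * X).trace) '' sdpFeas A b,
      R * lam / 2 + ∑ i, μ i * b i ≤ t := by
    rintro t ⟨X, hX, rfl⟩
    have := hlow X hX
    show _ ≤ (C * X).trace
    rw [hCX X hX.2.1]; linarith
  refine ⟨?_, ?_, ?_⟩
  · show Aop A _ = b
    rw [hYY]; exact hY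
  · have : fstar A b C ≤ (C * (Y * Yᵀ)).trace := csInf_le ⟨_, hlb⟩ ⟨_, hYf, rfl⟩
    linarith
  · have : R * lam / 2 + ∑ i, μ i * b i ≤ fstar A b C := le_csInf ⟨_, _, hYf, rfl⟩ hlb
    rw [hCX _ hY, hSY]
    linarith

end
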